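/- arXiv:1512.08287 — 2 statements merged into one kernel-verified Lean document; each statement's English description precedes it below -/
import Mathlib

section
/- Let $R_0$ be a domain, $\mathfrak{f} \geq 4$, $R = R_0[x_{i,j}]$, $I = \operatorname{Pf}_4(\mathbf{X})$, $A = R/I$, $F = R^{\mathfrak f}$. Then the complex $\bigwedge^3 \bar F^* \xrightarrow{\bar d_1} \bar F^* \xrightarrow{\bar d_0} \bar F \xrightarrow{\bar\delta_1} \bigwedge^3 \bar F$ over $A$ is exact, where $d_1(\phi_3) = \xi(\phi_3)$, $d_0(\phi_1) = \phi_1(\xi)$, and $\delta_1(f_1) = f_1 \wedge \xi$, with $\xi = \sum_{i<j} x_{i,j}\, e_i \wedge e_j \in \bigwedge^2 F$. -/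
open CategoryTheory

noncomputable section
namespace AluffiStmt

universe u

/-- The index set for the entries of a generic `f × f` alternating matrix:
pairs `(i, j)` with `i < j`. -/
abbrev P2 (f : ℕ) := {p : Fin f × Fin f // p.1 < p.2}

/-- `l` is a (weakly) regular sequence on `R`: each entry is a nonzerodivisor
modulo the ideal generated by the previous entries. -/
def IsRegSeq (R : Type*) [CommRing R] (l : List R) : Prop :=
  ∀ (i : ℕ) (h : i < l.length) (x : R),
    l.get ⟨i, h⟩ * x ∈ Ideal.span {y | y ∈ l.take i} →
      x ∈ Ideal.span {y | y ∈ l.take i}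

/-- The grade of an ideal: the supremum of lengths of regular sequences on `R`
contained in `I`. -/
def grade {R : Type*} [CommRing R] (I : Ideal R) : ℕ :=
  sSup {n | ∃ l : List R, l.length = n ∧ (∀ r ∈ l, r ∈ I) ∧ IsRegSeq R l}

/-- Projective dimension at most `n`, expressed by vanishing of `Ext^i (M, -)`
for all `i > n`. -/
def projDimLE (R : Type u) [CommRing R] (M : ModuleCat.{u} R) (n : ℕ) : Prop :=
  ∀ (N : ModuleCat.{u} R) (i : ℕ), n < i →
    Subsingleton (((Ext R (ModuleCat.{u} R) i).obj (Opposite.op M)).obj N)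

/-- `M` has projective dimension exactly `n`. -/
def projDimEq (R : Type u) [CommRing R] (M : ModuleCat.{u} R) (n : ℕ) : Prop :=
  projDimLE R M n ∧ ∀ k : ℕ, projDimLE R M k → n ≤ k

/-- An ideal `I` is perfect if `grade I = pd_R (R/I)`. -/
def IsPerfectIdeal (R : Type u) [CommRing R] (I : Ideal R) : Prop :=
  projDimEq R (ModuleCat.of R (R ⧸ I)) (grade I)
/-- The `(i,j)` entry of the generic alternating matrix `X`. -/
def xv (R₀ : Type u) [CommRing R₀] (f : ℕ) (i j : Fin f) : MvPolynomial (P2 f) R₀ :=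
  if h : i < j then MvPolynomial.X ⟨(i, j), h⟩
  else if h : j < i then - MvPolynomial.X ⟨(j, i), h⟩ else 0

/-- The Pfaffian of the principal `4 × 4` submatrix of `X` with rows and
columns `i < j < k < l`. -/
def pf4 (R₀ : Type u) [CommRing R₀] (f : ℕ) (i j k l : Fin f) : MvPolynomial (P2 f) R₀ :=
  xv R₀ f i j * xv R₀ f k l - xv R₀ f i k * xv R₀ f j l + xv R₀ f i l * xv R₀ f j k

/-- The ideal `Pf₄(X)` generated by all `4 × 4` principal Pfaffians of the
generic alternating matrix `X`. -/
def Pf4 (R₀ : Type u) [CommRing R₀] (f : ℕ) : Ideal (MvPolynomial (P2 f) R₀) :=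
  Ideal.span {p | ∃ i j k l : Fin f, i < j ∧ j < k ∧ k < l ∧ p = pf4 R₀ f i j k l}

/-- Index set of strictly increasing triples `i < j < k` in `Fin f`,
indexing a basis of `⋀³F`. -/
abbrev T3 (f : ℕ) := {v : Fin f × Fin f × Fin f // v.1 < v.2.1 ∧ v.2.1 < v.2.2}

/-- The quotient ring `A = R/Pf₄(X)`. -/
abbrev Aring (R₀ : Type u) [CommRing R₀] (f : ℕ) : Type u :=
  MvPolynomial (P2 f) R₀ ⧸ Pf4 R₀ f

/-- The generic alternating matrix with entries in `A`. -/
def XA (R₀ : Type u) [CommRing R₀] (f : ℕ) : Matrix (Fin f) (Fin f) (Aring R₀ f) :=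
  fun i j => Ideal.Quotient.mk _ (xv R₀ f i j)

/-- The matrix of `d₁ : ⋀³F̄* → F̄*` (contraction against
`ξ = Σ_{i<j} x_{i,j} e_i ∧ e_j`): the column indexed by `i < j < k` is
`(…, x_{j,k}, …, -x_{i,k}, …, x_{i,j}, …)ᵀ`. -/
def M1 (R₀ : Type u) [CommRing R₀] (f : ℕ) : Matrix (Fin f) (T3 f) (Aring R₀ f) :=
  fun i v =>
    if i = v.1.1 then XA R₀ f v.1.2.1 v.1.2.2
    else if i = v.1.2.1 then - XA R₀ f v.1.1 v.1.2.2
    else if i = v.1.2.2 then XA R₀ f v.1.1 v.1.2.1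
    else 0

section SMT

open MvPolynomial

abbrev Sv (n : ℕ) := Lex (Fin n ⊕ Fin n)

def va {n : ℕ} (i : Fin n) : Sv n := toLex (Sum.inl i)
def vb {n : ℕ} (i : Fin n) : Sv n := toLex (Sum.inr i)

def phiX (R₀ : Type u) [CommRing R₀] (n : ℕ) (i j : Fin n) : MvPolynomial (Sv n) R₀ :=
  X (va i) * X (vb j) - X (va j) * X (vb i)

def phi (R₀ : Type u) [CommRing R₀] (n : ℕ) :
    MvPolynomial (P2 n) R₀ →ₐ[R₀] MvPolynomial (Sv n) R₀ :=
  aeval fun p => phiX R₀ n p.1.1 p.1.2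

lemma phi_xv (R₀ : Type u) [CommRing R₀] (n : ℕ) (i j : Fin n) :
    phi R₀ n (xv R₀ n i j) = phiX R₀ n i j := by
  unfold xv
  split_ifs with h1 h2
  · simp [phi]
  · simp [phi, phiX]
  · have : i = j := by omega
    subst this
    simp [phiX]

lemma phi_pf4 (R₀ : Type u) [CommRing R₀] (n : ℕ) (i j k l : Fin n) :
    phi R₀ n (pf4 R₀ n i j k l) = 0 := by
  simp only [pf4, map_add, map_sub, map_mul, phi_xv, phiX]
  ring

lemma phi_Pf4 (R₀ : Type u) [CommRing R₀] (n : ℕ) (p) (hp : p ∈ Pf4 R₀ n) :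
    phi R₀ n p = 0 := by
  have : Pf4 R₀ n ≤ RingHom.ker (phi R₀ n) := by
    refine Ideal.span_le.2 ?_
    rintro _ ⟨i, j, k, l, -, -, -, rfl⟩
    exact phi_pf4 R₀ n i j k l
  exact this hp

/-- standard exponents: no nested pairs -/
def Std {n : ℕ} (m : P2 n →₀ ℕ) : Prop :=
  ∀ p q : P2 n, m p ≠ 0 → m q ≠ 0 → p.1.1 < q.1.1 → p.1.2 ≤ q.1.2

def mon (R₀ : Type u) [CommRing R₀] (n : ℕ) (m : P2 n →₀ ℕ) : Aring R₀ n :=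
  Ideal.Quotient.mk _ (monomial m 1)

def wt {n : ℕ} (m : P2 n →₀ ℕ) : ℕ :=
  m.sum fun p k => k * ((p.1.2 : ℕ) - (p.1.1 : ℕ)) ^ 2

lemma wt_add {n : ℕ} (m m' : P2 n →₀ ℕ) : wt (m + m') = wt m + wt m' := by
  unfold wt
  exact Finsupp.sum_add_index' (by simp) (by intros; ring)

lemma wt_single {n : ℕ} (p : P2 n) :
    wt (Finsupp.single p 1) = ((p.1.2 : ℕ) - (p.1.1 : ℕ)) ^ 2 := by
  simp [wt]

lemma mon_add (R₀ : Type u) [CommRing R₀] (n : ℕ) (m m' : P2 n →₀ ℕ) :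
    mon R₀ n (m + m') = mon R₀ n m * mon R₀ n m' := by
  simp [mon, ← map_mul, monomial_mul]

lemma mon_single (R₀ : Type u) [CommRing R₀] (n : ℕ) (i j : Fin n) (h : i < j) :
    mon R₀ n (Finsupp.single ⟨(i, j), h⟩ 1) = XA R₀ n i j := by
  simp [mon, XA, xv, h, X]

lemma pluck (R₀ : Type u) [CommRing R₀] (n : ℕ) (i j k l : Fin n) (h1 : i < j) (h2 : j < k)
    (h3 : k < l) : XA R₀ n i j * XA R₀ n k l - XA R₀ n i k * XA R₀ n j l
      + XA R₀ n i l * XA R₀ n j k = 0 := by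
  have : (Ideal.Quotient.mk (Pf4 R₀ n)) (pf4 R₀ n i j k l) = 0 :=
    Ideal.Quotient.eq_zero_iff_mem.2 (Ideal.subset_span ⟨i, j, k, l, h1, h2, h3, rfl⟩)
  simpa [pf4, XA] using this

lemma mon_span (R₀ : Type u) [CommRing R₀] (n : ℕ) (m : P2 n →₀ ℕ) :
    mon R₀ n m ∈ Submodule.span R₀ (mon R₀ n '' {m | Std m}) := by
  induction hw : wt m using Nat.strong_induction_on generalizing m with
  | _ w ih =>
  subst hw
  by_cases hm : Std m
  · exact Submodule.subset_span ⟨m, hm, rfl⟩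
  · unfold Std at hm
    push Not at hm
    obtain ⟨⟨⟨i, l⟩, hil⟩, ⟨⟨j, k⟩, hjk⟩, hp, hq, h1, h2⟩ := hm
    simp only at hil hjk h1 h2
    have hne : (⟨(i, l), hil⟩ : P2 n) ≠ ⟨(j, k), hjk⟩ := by
      intro h
      simp at h
      omega
    obtain ⟨m', rfl⟩ : ∃ m', m = Finsupp.single ⟨(i, l), hil⟩ 1 + Finsupp.single ⟨(j, k), hjk⟩ 1 + m' := by
      refine ⟨m - (Finsupp.single ⟨(i, l), hil⟩ 1 + Finsupp.single ⟨(j, k), hjk⟩ 1), ?_⟩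
      rw [add_tsub_cancel_of_le]
      intro p
      by_cases e1 : p = ⟨(i, l), hil⟩
      · subst e1
        rw [Finsupp.add_apply, Finsupp.single_eq_same, Finsupp.single_eq_of_ne hne]
        omega
      · rw [Finsupp.add_apply, Finsupp.single_eq_of_ne e1]
        by_cases e2 : p = ⟨(j, k), hjk⟩
        · subst e2
          rw [Finsupp.single_eq_same]
          omega
        · rw [Finsupp.single_eq_of_ne e2]
          omega
    have hik : i < k := h1.trans hjk
    have hjl : j < l := hjk.trans h2
    have key : mon R₀ n (Finsupp.single ⟨(i, l), hil⟩ 1 + Finsupp.single ⟨(j, k), hjk⟩ 1 + m')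
      = mon R₀ n (Finsupp.single ⟨(i, k), hik⟩ 1 + Finsupp.single ⟨(j, l), hjl⟩ 1 + m')
       - mon R₀ n (Finsupp.single ⟨(i, j), h1⟩ 1 + Finsupp.single ⟨(k, l), h2⟩ 1 + m') := by
      simp only [mon_add, mon_single]
      linear_combination (mon R₀ n m') * pluck R₀ n i j k l h1 hjk h2
    rw [key]
    have hi : (i : ℕ) < j := h1
    have hj : (j : ℕ) < k := hjk
    have hk : (k : ℕ) < l := h2
    obtain ⟨a, ha⟩ := Nat.exists_eq_add_of_lt hi
    obtain ⟨b, hb⟩ := Nat.exists_eq_add_of_lt hj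
    obtain ⟨c, hc⟩ := Nat.exists_eq_add_of_lt hk
    refine Submodule.sub_mem _ (ih _ ?_ _ rfl) (ih _ ?_ _ rfl)
    · simp only [wt_add, wt_single]
      have e1 : (l : ℕ) - i = a + b + c + 3 := by omega
      have e2 : (k : ℕ) - j = b + 1 := by omega
      have e3 : (k : ℕ) - i = a + b + 2 := by omega
      have e4 : (l : ℕ) - j = b + c + 2 := by omega
      rw [e1, e2, e3, e4]
      nlinarith [Nat.zero_le (a * c), Nat.zero_le (a * b), Nat.zero_le (b * c)]
    · simp only [wt_add, wt_single]
      have e1 : (l : ℕ) - i = a + b + c + 3 := by omega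
      have e2 : (k : ℕ) - j = b + 1 := by omega
      have e3 : (j : ℕ) - i = a + 1 := by omega
      have e4 : (l : ℕ) - k = c + 1 := by omega
      rw [e1, e2, e3, e4]
      nlinarith [Nat.zero_le (a * c), Nat.zero_le (a * b), Nat.zero_le (b * c)]

lemma span_top (R₀ : Type u) [CommRing R₀] (n : ℕ) :
    Submodule.span R₀ (mon R₀ n '' {m | Std m}) = ⊤ := by
  rw [eq_top_iff]
  rintro x -
  obtain ⟨p, rfl⟩ := Ideal.Quotient.mk_surjective x
  induction p using MvPolynomial.induction_on' with
  | monomial m a =>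
    have : Ideal.Quotient.mk (Pf4 R₀ n) (monomial m a) = a • mon R₀ n m := by
      rw [mon, ← Ideal.Quotient.mkₐ_eq_mk R₀, ← map_smul, smul_monomial, smul_eq_mul, mul_one]
    rw [this]
    exact Submodule.smul_mem _ _ (mon_span R₀ n m)
  | add p q hp hq =>
    rw [map_add]
    exact Submodule.add_mem _ hp hq

/-- leading exponent -/
def Ld {n : ℕ} (m : P2 n →₀ ℕ) : Sv n →₀ ℕ :=
  m.sum fun p k => k • (Finsupp.single (va p.1.1) 1 + Finsupp.single (vb p.1.2) 1)

lemma Ld_add {n : ℕ} (m m' : P2 n →₀ ℕ) : Ld (m + m') = Ld m + Ld m' := by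
  unfold Ld
  exact Finsupp.sum_add_index' (by simp) (by intros; rw [add_smul])

lemma Ld_single {n : ℕ} (p : P2 n) :
    Ld (Finsupp.single p 1) = Finsupp.single (va p.1.1) 1 + Finsupp.single (vb p.1.2) 1 := by
  simp [Ld]

lemma va_ne_vb {n : ℕ} (i j : Fin n) : va i ≠ vb j := by
  simp [va, vb]

lemma va_inj {n : ℕ} (i j : Fin n) : va i = va j ↔ i = j := by
  simp [va]

lemma vb_inj {n : ℕ} (i j : Fin n) : vb i = vb j ↔ i = j := by
  simp [vb]

lemma exists_sub {n : ℕ} {m : P2 n →₀ ℕ} {p : P2 n} (h : m p ≠ 0) :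
    ∃ m', m = Finsupp.single p 1 + m' := by
  refine ⟨m - Finsupp.single p 1, ?_⟩
  rw [add_tsub_cancel_of_le]
  rw [Finsupp.single_le_iff]
  omega

lemma Ld_va {n : ℕ} (m : P2 n →₀ ℕ) (i : Fin n) :
    Ld m (va i) ≠ 0 ↔ ∃ p, m p ≠ 0 ∧ p.1.1 = i := by
  unfold Ld
  rw [Finsupp.sum_apply, Finsupp.sum]
  simp [Finsupp.single_apply, va_inj, (va_ne_vb _ _).symm]
  grind

lemma Ld_vb {n : ℕ} (m : P2 n →₀ ℕ) (i : Fin n) :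
    Ld m (vb i) ≠ 0 ↔ ∃ p, m p ≠ 0 ∧ p.1.2 = i := by
  unfold Ld
  rw [Finsupp.sum_apply, Finsupp.sum]
  simp [Finsupp.single_apply, vb_inj, (va_ne_vb _ _)]
  grind

lemma std_min {n : ℕ} (m : P2 n →₀ ℕ) (hm : Std m) (i j : Fin n)
    (hi : Ld m (va i) ≠ 0) (hi' : ∀ i', Ld m (va i') ≠ 0 → i ≤ i')
    (hj : Ld m (vb j) ≠ 0) (hj' : ∀ j', Ld m (vb j') ≠ 0 → j ≤ j') :
    ∃ p, m p ≠ 0 ∧ p.1 = (i, j) := by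
  obtain ⟨p, hp, rfl⟩ := (Ld_va m i).1 hi
  obtain ⟨q, hq, rfl⟩ := (Ld_vb m j).1 hj
  have h1 := hi' q.1.1 ((Ld_va m _).2 ⟨q, hq, rfl⟩)
  have h2 := hj' p.1.2 ((Ld_vb m _).2 ⟨p, hp, rfl⟩)
  rcases h1.eq_or_lt with h | h
  · exact ⟨q, hq, by rw [h]⟩
  · have := hm p q hp hq h
    exact ⟨p, hp, by rw [le_antisymm h2 this]⟩

lemma std_sub {n : ℕ} (m m' : P2 n →₀ ℕ) (h : Std (m + m')) : Std m' := by
  intro p q hp hq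
  exact h p q (by simp; omega) (by simp; omega)

lemma exists_min {n : ℕ} (P : Fin n → Prop) (h : ∃ i, P i) : ∃ i, P i ∧ ∀ i', P i' → i ≤ i' := by
  classical
  obtain ⟨i, hi, hm⟩ := Set.exists_min_image {i | P i} id (Set.toFinite _) h
  exact ⟨i, hi, hm⟩

lemma Ld_inj {n : ℕ} (m m' : P2 n →₀ ℕ) (hm : Std m) (hm' : Std m') (h : Ld m = Ld m') :
    m = m' := by
  induction hd : m.degree generalizing m m' with
  | zero =>
    have h0 : m = 0 := (Finsupp.degree_eq_zero_iff m).1 hd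
    subst h0
    by_contra hne
    obtain ⟨p, hp⟩ := Finsupp.ne_iff.1 (Ne.symm hne)
    have := (Ld_va m' p.1.1).2 ⟨p, hp, rfl⟩
    rw [← h] at this
    simp [Ld] at this
  | succ d ih =>
    have hne : m ≠ 0 := by
      rintro rfl
      simp at hd
    obtain ⟨p, hp⟩ := Finsupp.ne_iff.1 hne
    obtain ⟨i, hi, hi'⟩ := exists_min (fun i => Ld m (va i) ≠ 0) ⟨_, (Ld_va m _).2 ⟨p, hp, rfl⟩⟩
    obtain ⟨j, hj, hj'⟩ := exists_min (fun i => Ld m (vb i) ≠ 0) ⟨_, (Ld_vb m _).2 ⟨p, hp, rfl⟩⟩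
    obtain ⟨r, hr, hr'⟩ := std_min m hm i j hi hi' hj hj'
    rw [h] at hi hj
    simp only [h] at hi' hj'
    obtain ⟨s, hs, hs'⟩ := std_min m' hm' i j hi hi' hj hj'
    obtain rfl : r = s := Subtype.ext (hr'.trans hs'.symm)
    obtain ⟨t, rfl⟩ := exists_sub hr
    obtain ⟨t', rfl⟩ := exists_sub hs
    rw [Ld_add, Ld_add] at h
    rw [ih t t' (std_sub _ _ hm) (std_sub _ _ hm') (add_left_cancel h) ?_]
    rw [map_add, Finsupp.degree_single] at hd
    omega

lemma deg_phiX (R₀ : Type u) [CommRing R₀] [IsDomain R₀] (n : ℕ) (i j : Fin n) (h : i < j) :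
    MonomialOrder.lex.degree (phiX R₀ n i j) =
      Finsupp.single (va i) 1 + Finsupp.single (vb j) 1 := by
  classical
  have e : ∀ i j : Fin n, (X (va i) * X (vb j) : MvPolynomial (Sv n) R₀)
      = monomial (Finsupp.single (va i) 1 + Finsupp.single (vb j) 1) 1 := by
    intro i j
    simp [X, monomial_mul]
  unfold phiX
  rw [MonomialOrder.degree_sub_of_lt, e, MonomialOrder.degree_monomial]
  · simp
  · rw [e, e, MonomialOrder.degree_monomial, MonomialOrder.degree_monomial]
    simp only [one_ne_zero, if_false]
    rw [MonomialOrder.lex_lt_iff, Finsupp.Lex.lt_iff]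
    refine ⟨va i, ?_, ?_⟩
    · intro k hk
      have h1 : k ≠ va i := hk.ne
      have h2 : k ≠ va j := (hk.trans (Sum.Lex.inl_lt_inl_iff.2 h)).ne
      have h3 : k ≠ vb i := (hk.trans (Sum.Lex.inl_lt_inr _ _)).ne
      have h4 : k ≠ vb j := (hk.trans (Sum.Lex.inl_lt_inr _ _)).ne
      simp [h1.symm, h2.symm, h3.symm, h4.symm]
    · simp [va_inj, (va_ne_vb _ _).symm, h.ne']

lemma phiX_ne (R₀ : Type u) [CommRing R₀] [IsDomain R₀] (n : ℕ) (i j : Fin n) (h : i < j) :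
    phiX R₀ n i j ≠ 0 := by
  intro h0
  have := deg_phiX R₀ n i j h
  rw [h0, MonomialOrder.degree_zero] at this
  have := DFunLike.congr_fun this (va i)
  simp only [Finsupp.add_apply, Finsupp.single_eq_same, Finsupp.coe_zero, Pi.zero_apply] at this
  omega

lemma phi_mon (R₀ : Type u) [CommRing R₀] (n : ℕ) (m : P2 n →₀ ℕ) :
    phi R₀ n (monomial m 1) = m.prod fun p k => phiX R₀ n p.1.1 p.1.2 ^ k := by
  rw [phi, aeval_monomial, map_one, one_mul]

lemma phi_mon_ne (R₀ : Type u) [CommRing R₀] [IsDomain R₀] (n : ℕ) (m : P2 n →₀ ℕ) :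
    phi R₀ n (monomial m 1) ≠ 0 := by
  rw [phi_mon]
  exact Finset.prod_ne_zero_iff.2 fun p _ => pow_ne_zero _ (phiX_ne R₀ n _ _ p.2)

lemma deg_phi_mon (R₀ : Type u) [CommRing R₀] [IsDomain R₀] (n : ℕ) (m : P2 n →₀ ℕ) :
    MonomialOrder.lex.degree (phi R₀ n (monomial m 1)) = Ld m := by
  rw [phi_mon, Finsupp.prod, MonomialOrder.degree_prod]
  · unfold Ld Finsupp.sum
    refine Finset.sum_congr rfl fun p _ => ?_
    rw [MonomialOrder.degree_pow, deg_phiX R₀ n _ _ p.2]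
  · exact fun p _ => pow_ne_zero _ (phiX_ne R₀ n _ _ p.2)

lemma phi_indep (R₀ : Type u) [CommRing R₀] [IsDomain R₀] (n : ℕ) :
    LinearIndependent R₀ (fun m : {m : P2 n →₀ ℕ // Std m} => phi R₀ n (monomial m.1 1)) := by
  classical
  rw [linearIndependent_iff']
  intro s g hg
  by_contra hne
  push Not at hne
  have hs : (s.filter fun m => g m ≠ 0).Nonempty := by
    obtain ⟨i, hi, h⟩ := hne
    exact ⟨i, by simp [hi, h]⟩
  obtain ⟨m, hm, hmax⟩ := Finset.exists_max_image _
    (fun m : {m : P2 n →₀ ℕ // Std m} => MonomialOrder.lex.toSyn (Ld m.1)) hs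
  rw [Finset.mem_filter] at hm
  have hc := congrArg (coeff (Ld m.1)) hg
  rw [coeff_sum, coeff_zero, Finset.sum_eq_single m] at hc
  · rw [coeff_smul, smul_eq_mul, mul_eq_zero] at hc
    rcases hc with hc | hc
    · exact hm.2 hc
    · rw [← deg_phi_mon R₀] at hc
      exact MonomialOrder.coeff_degree_ne_zero_iff.2 (phi_mon_ne R₀ n m.1) hc
  · intro b hb hbm
    by_cases h0 : g b = 0
    · simp [h0]
    · rw [coeff_smul, MonomialOrder.coeff_eq_zero_of_lt (m := MonomialOrder.lex), smul_zero]
      rw [deg_phi_mon]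
      refine lt_of_le_of_ne (hmax b (by simp [hb, h0])) ?_
      intro he
      exact hbm (Subtype.ext (Ld_inj _ _ b.2 m.2 (MonomialOrder.lex.toSyn.injective he)))
  · intro h
    exact absurd hm.1 h

/-- induced map on A -/
def phiA (R₀ : Type u) [CommRing R₀] (n : ℕ) : Aring R₀ n →ₐ[R₀] MvPolynomial (Sv n) R₀ :=
  Ideal.Quotient.liftₐ (Pf4 R₀ n) (phi R₀ n) (phi_Pf4 R₀ n)

lemma phiA_mk (R₀ : Type u) [CommRing R₀] (n : ℕ) (p : MvPolynomial (P2 n) R₀) :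
    phiA R₀ n (Ideal.Quotient.mk _ p) = phi R₀ n p := rfl

lemma mon_indep (R₀ : Type u) [CommRing R₀] [IsDomain R₀] (n : ℕ) :
    LinearIndependent R₀ (fun m : {m : P2 n →₀ ℕ // Std m} => mon R₀ n m.1) :=
  LinearIndependent.of_comp (phiA R₀ n).toLinearMap (phi_indep R₀ n)

lemma phiA_inj (R₀ : Type u) [CommRing R₀] [IsDomain R₀] (n : ℕ) :
    Function.Injective (phiA R₀ n) := by
  have h := (phi_indep R₀ n)
  have hr : Submodule.span R₀ (Set.range fun m : {m : P2 n →₀ ℕ // Std m} => mon R₀ n m.1) = ⊤ := by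
    rw [← span_top]
    congr 1
    ext x
    simp
  rw [injective_iff_map_eq_zero]
  intro x hx
  have hx' : x ∈ Submodule.span R₀
      (Set.range fun m : {m : P2 n →₀ ℕ // Std m} => mon R₀ n m.1) := by
    rw [hr]
    trivial
  rw [Finsupp.mem_span_range_iff_exists_finsupp] at hx'
  obtain ⟨c, rfl⟩ := hx'
  have h0 : c = 0 := by
    apply linearIndependent_iff.1 h
    rw [Finsupp.linearCombination_apply, ← hx, map_finsuppSum]
    simp [mon, phiA_mk]
  simp [h0]

instance domA (R₀ : Type u) [CommRing R₀] [IsDomain R₀] (n : ℕ) : IsDomain (Aring R₀ n) :=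
  (phiA_inj R₀ n).isDomain (phiA R₀ n)

end SMT
section Reg

lemma std_add_min {n : ℕ} (p0 : P2 n) (h0 : ∀ q : P2 n, p0.1.1 ≤ q.1.1 ∧ p0.1.2 ≤ q.1.2)
    (m : P2 n →₀ ℕ) (hm : Std m) : Std (Finsupp.single p0 1 + m) := by
  intro p q hp hq hlt
  by_cases e1 : p = p0
  · subst e1
    exact (h0 q).2
  · by_cases e2 : q = p0
    · subst e2
      exact absurd (h0 p).1 (not_le.2 hlt)
    · rw [Finsupp.add_apply, Finsupp.single_eq_of_ne e1, zero_add] at hp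
      rw [Finsupp.add_apply, Finsupp.single_eq_of_ne e2, zero_add] at hq
      exact hm p q hp hq hlt

lemma std_add_max {n : ℕ} (p0 : P2 n) (h0 : ∀ q : P2 n, q.1.1 ≤ p0.1.1 ∧ q.1.2 ≤ p0.1.2)
    (m : P2 n →₀ ℕ) (hm : Std m) : Std (Finsupp.single p0 1 + m) := by
  intro p q hp hq hlt
  by_cases e1 : q = p0
  · subst e1
    exact (h0 p).2
  · by_cases e2 : p = p0
    · subst e2
      exact absurd (h0 q).1 (not_le.2 hlt)
    · rw [Finsupp.add_apply, Finsupp.single_eq_of_ne e2, zero_add] at hp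
      rw [Finsupp.add_apply, Finsupp.single_eq_of_ne e1, zero_add] at hq
      exact hm p q hp hq hlt

lemma mon_ne (R₀ : Type u) [CommRing R₀] [IsDomain R₀] (n : ℕ) (m : P2 n →₀ ℕ) :
    mon R₀ n m ≠ 0 := by
  intro h
  apply phi_mon_ne R₀ n m
  rw [← phiA_mk]
  change phiA R₀ n (mon R₀ n m) = 0
  rw [h, map_zero]

lemma decomp (R₀ : Type u) [CommRing R₀] (n : ℕ) (p0 : P2 n) (u : Aring R₀ n) :
    ∃ u0 ∈ Submodule.span R₀ ((fun m : {m : P2 n →₀ ℕ // Std m} => mon R₀ n m.1) ''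
      {m | m.1 p0 = 0}), ∃ u', u = u0 + mon R₀ n (Finsupp.single p0 1) * u' := by
  have hu : u ∈ Submodule.span R₀ (mon R₀ n '' {m | Std m}) := by rw [span_top]; trivial
  induction hu using Submodule.span_induction with
  | mem x hx =>
    obtain ⟨m, hm, rfl⟩ := hx
    by_cases h : m p0 = 0
    · exact ⟨_, Submodule.subset_span ⟨⟨m, hm⟩, h, rfl⟩, 0, by simp⟩
    · obtain ⟨m', rfl⟩ := exists_sub h
      exact ⟨0, Submodule.zero_mem _, mon R₀ n m', by rw [mon_add, zero_add]⟩
  | zero => exact ⟨0, Submodule.zero_mem _, 0, by simp⟩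
  | add x y _ _ hx hy =>
    obtain ⟨x0, hx0, x', hx'⟩ := hx
    obtain ⟨y0, hy0, y', hy'⟩ := hy
    exact ⟨_, Submodule.add_mem _ hx0 hy0, x' + y', by rw [hx', hy']; ring⟩
  | smul a x _ hx =>
    obtain ⟨x0, hx0, x', hx'⟩ := hx
    exact ⟨_, Submodule.smul_mem _ a hx0, a • x', by rw [hx', smul_add, mul_smul_comm]⟩

lemma mul_min_mem (R₀ : Type u) [CommRing R₀] (n : ℕ) (p0 : P2 n)
    (h0 : ∀ q : P2 n, p0.1.1 ≤ q.1.1 ∧ p0.1.2 ≤ q.1.2) (u : Aring R₀ n) :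
    mon R₀ n (Finsupp.single p0 1) * u ∈
      Submodule.span R₀ ((fun m : {m : P2 n →₀ ℕ // Std m} => mon R₀ n m.1) ''
      {m | m.1 p0 ≠ 0}) := by
  have hu : u ∈ Submodule.span R₀ (mon R₀ n '' {m | Std m}) := by rw [span_top]; trivial
  induction hu using Submodule.span_induction with
  | mem x hx =>
    obtain ⟨m, hm, rfl⟩ := hx
    refine Submodule.subset_span ⟨⟨_, std_add_min p0 h0 m hm⟩, ?_, mon_add R₀ n _ _⟩
    simp
  | zero => simp
  | add x y _ _ hx hy => rw [mul_add]; exact Submodule.add_mem _ hx hy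
  | smul a x _ hx => rw [mul_smul_comm]; exact Submodule.smul_mem _ _ hx

lemma mul_max_mem (R₀ : Type u) [CommRing R₀] (n : ℕ) (p0 p1 : P2 n) (hne : p0 ≠ p1)
    (h1 : ∀ q : P2 n, q.1.1 ≤ p1.1.1 ∧ q.1.2 ≤ p1.1.2) (u : Aring R₀ n)
    (hu : u ∈ Submodule.span R₀ ((fun m : {m : P2 n →₀ ℕ // Std m} => mon R₀ n m.1) ''
      {m | m.1 p0 = 0})) :
    mon R₀ n (Finsupp.single p1 1) * u ∈
      Submodule.span R₀ ((fun m : {m : P2 n →₀ ℕ // Std m} => mon R₀ n m.1) ''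
      {m | m.1 p0 = 0}) := by
  induction hu using Submodule.span_induction with
  | mem x hx =>
    obtain ⟨m, hm, rfl⟩ := hx
    refine Submodule.subset_span ⟨⟨_, std_add_max p1 h1 m.1 m.2⟩, ?_, mon_add R₀ n _ _⟩
    change (Finsupp.single p1 1 + m.1 : P2 n →₀ ℕ) p0 = 0
    rw [Finsupp.add_apply, Finsupp.single_eq_of_ne hne, zero_add]
    exact hm
  | zero => simp
  | add x y _ _ hx hy => rw [mul_add]; exact Submodule.add_mem _ hx hy
  | smul a x _ hx => rw [mul_smul_comm]; exact Submodule.smul_mem _ _ hx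

lemma reg_pair (R₀ : Type u) [CommRing R₀] [IsDomain R₀] (n : ℕ) (p0 p1 : P2 n) (hne : p0 ≠ p1)
    (h0 : ∀ q : P2 n, p0.1.1 ≤ q.1.1 ∧ p0.1.2 ≤ q.1.2)
    (h1 : ∀ q : P2 n, q.1.1 ≤ p1.1.1 ∧ q.1.2 ≤ p1.1.2) (u w : Aring R₀ n)
    (h : mon R₀ n (Finsupp.single p1 1) * u = mon R₀ n (Finsupp.single p0 1) * w) :
    ∃ u', u = mon R₀ n (Finsupp.single p0 1) * u' := by
  obtain ⟨u0, hu0, u', rfl⟩ := decomp R₀ n p0 u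
  have e : mon R₀ n (Finsupp.single p1 1) * u0 = mon R₀ n (Finsupp.single p0 1) *
      (w - mon R₀ n (Finsupp.single p1 1) * u') := by
    linear_combination h
  have hd := (mon_indep R₀ n).disjoint_span_image (s := {m | m.1 p0 = 0})
    (t := {m | m.1 p0 ≠ 0}) (by
      rw [Set.disjoint_left]
      intro a ha hb
      exact hb ha)
  have hz := Submodule.disjoint_def.1 hd _ (mul_max_mem R₀ n p0 p1 hne h1 u0 hu0)
    (e ▸ mul_min_mem R₀ n p0 h0 _)
  rcases mul_eq_zero.1 hz with h | h
  · exact absurd h (mon_ne R₀ n _)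
  · exact ⟨u', by rw [h, zero_add]⟩

lemma pluck' (R₀ : Type u) [CommRing R₀] [IsDomain R₀] (n : ℕ) (i j k l : Fin n) :
    XA R₀ n i j * XA R₀ n k l - XA R₀ n i k * XA R₀ n j l
      + XA R₀ n i l * XA R₀ n j k = 0 := by
  apply phiA_inj R₀ n
  rw [map_zero, ← phi_pf4 R₀ n i j k l, ← phiA_mk]
  simp [pf4, XA]

lemma XA_swap (R₀ : Type u) [CommRing R₀] (n : ℕ) (i j : Fin n) :
    XA R₀ n j i = - XA R₀ n i j := by
  unfold XA xv
  rcases lt_trichotomy i j with h | h | h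
  · simp [h, h.not_gt]
  · subst h; simp
  · simp [h, h.not_gt]

lemma XA_self (R₀ : Type u) [CommRing R₀] (n : ℕ) (i : Fin n) : XA R₀ n i i = 0 := by
  simp [XA, xv]

lemma XA_ne (R₀ : Type u) [CommRing R₀] [IsDomain R₀] (n : ℕ) (i j : Fin n) (h : i < j) :
    XA R₀ n i j ≠ 0 := by
  rw [← mon_single R₀ n i j h]
  exact mon_ne _ _ _

lemma M1_dot (R₀ : Type u) [CommRing R₀] (f : ℕ) (g : Fin f → Aring R₀ f) (i j k : Fin f)
    (h1 : i < j) (h2 : j < k) :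
    ∑ r, M1 R₀ f r ⟨(i, j, k), h1, h2⟩ * g r =
      XA R₀ f j k * g i - XA R₀ f i k * g j + XA R₀ f i j * g k := by
  have : ∀ r, M1 R₀ f r ⟨(i, j, k), h1, h2⟩ * g r =
      (if r = i then XA R₀ f j k * g r else 0) + (if r = j then - XA R₀ f i k * g r else 0)
      + (if r = k then XA R₀ f i j * g r else 0) := by
    intro r
    unfold M1
    have := h1.trans h2
    by_cases e1 : r = i
    · subst e1; simp [h1.ne, this.ne]
    · by_cases e2 : r = j
      · subst e2; simp [h1.ne', h2.ne]
      · simp [e1, e2]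
  simp only [this, Finset.sum_add_distrib, Finset.sum_ite_eq', Finset.mem_univ, if_true]
  ring

end Reg
section Final

/-- the cokernel of `d₁` -/
def Nmod (R₀ : Type u) [CommRing R₀] (f : ℕ) : Type u :=
  (Fin f → Aring R₀ f) ⧸ LinearMap.range (M1 R₀ f).mulVecLin

instance (R₀ : Type u) [CommRing R₀] (f : ℕ) : AddCommGroup (Nmod R₀ f) :=
  inferInstanceAs (AddCommGroup ((Fin f → Aring R₀ f) ⧸ LinearMap.range (M1 R₀ f).mulVecLin))

instance (R₀ : Type u) [CommRing R₀] (f : ℕ) : Module (Aring R₀ f) (Nmod R₀ f) :=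
  inferInstanceAs (Module (Aring R₀ f)
    ((Fin f → Aring R₀ f) ⧸ LinearMap.range (M1 R₀ f).mulVecLin))

instance (R₀ : Type u) [CommRing R₀] (f : ℕ) : Module (Aring R₀ f)ᵐᵒᵖ (Nmod R₀ f) :=
  Module.compHom _ ((RingHom.id (Aring R₀ f)).fromOpposite mul_comm)

instance (R₀ : Type u) [CommRing R₀] (f : ℕ) : IsCentralScalar (Aring R₀ f) (Nmod R₀ f) :=
  ⟨fun _ _ => rfl⟩

def qm (R₀ : Type u) [CommRing R₀] (f : ℕ) : (Fin f → Aring R₀ f) →ₗ[Aring R₀ f] Nmod R₀ f :=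
  (LinearMap.range (M1 R₀ f).mulVecLin).mkQ

lemma qm_zero (R₀ : Type u) [CommRing R₀] (f : ℕ) (v) :
    qm R₀ f v = 0 ↔ v ∈ LinearMap.range (M1 R₀ f).mulVecLin :=
  Submodule.Quotient.mk_eq_zero _

lemma qm_surj (R₀ : Type u) [CommRing R₀] (f : ℕ) : Function.Surjective (qm R₀ f) :=
  Submodule.mkQ_surjective _

def ee (R₀ : Type u) [CommRing R₀] (f : ℕ) (i : Fin f) : Nmod R₀ f :=
  qm R₀ f (Pi.single i 1)

lemma ee_sum (R₀ : Type u) [CommRing R₀] (f : ℕ) (v : Fin f → Aring R₀ f) :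
    ∑ i, v i • ee R₀ f i = qm R₀ f v := by
  conv_rhs => rw [pi_eq_sum_univ' v]
  rw [map_sum]
  refine Finset.sum_congr rfl fun i _ => ?_
  rw [map_smul, ee]

lemma ee_rel (R₀ : Type u) [CommRing R₀] (f : ℕ) (i j k : Fin f) (h1 : i < j) (h2 : j < k) :
    XA R₀ f j k • ee R₀ f i - XA R₀ f i k • ee R₀ f j + XA R₀ f i j • ee R₀ f k = 0 := by
  unfold ee
  rw [← map_smul, ← map_smul, ← map_smul, ← map_sub, ← map_add, qm_zero]
  refine ⟨Pi.single ⟨(i, j, k), h1, h2⟩ 1, ?_⟩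
  have := h1.trans h2
  ext r
  simp only [Matrix.mulVecLin_apply, Matrix.mulVec_single_one, Matrix.col_apply]
  unfold M1
  by_cases e1 : r = i
  · subst e1; simp [h1.ne, this.ne]
  · by_cases e2 : r = j
    · subst e2; simp [h1.ne', h2.ne]
    · simp [e1, e2, Pi.single_apply]

abbrev Tz (R₀ : Type u) [CommRing R₀] (f : ℕ) : Type u := TrivSqZeroExt (Aring R₀ f) (Nmod R₀ f)

instance (R₀ : Type u) [CommRing R₀] (f : ℕ) : CommRing (Tz R₀ f) := TrivSqZeroExt.commRing

def YY (R₀ : Type u) [CommRing R₀] (f : ℕ) (c : Fin (f + 1)) :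
    Fin (f + 1) → Fin (f + 1) → Tz R₀ f :=
  Fin.insertNth (α := fun _ => Fin (f + 1) → Tz R₀ f) c
    (Fin.insertNth (α := fun _ => Tz R₀ f) c 0 (fun j => - TrivSqZeroExt.inr (ee R₀ f j)))
    (fun i => Fin.insertNth (α := fun _ => Tz R₀ f) c (TrivSqZeroExt.inr (ee R₀ f i))
      (fun j => TrivSqZeroExt.inl (XA R₀ f i j)))

section
variable (R₀ : Type u) [CommRing R₀] (f : ℕ) (c : Fin (f + 1))

lemma YY_cc : YY R₀ f c c c = 0 := by simp [YY]
lemma YY_cs (j) : YY R₀ f c c (c.succAbove j) = - TrivSqZeroExt.inr (ee R₀ f j) := by simp [YY]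
lemma YY_sc (j) : YY R₀ f c (c.succAbove j) c = TrivSqZeroExt.inr (ee R₀ f j) := by simp [YY]
lemma YY_ss (i j) : YY R₀ f c (c.succAbove i) (c.succAbove j) =
    TrivSqZeroExt.inl (XA R₀ f i j) := by simp [YY]

lemma YY_swap (p q) : YY R₀ f c q p = - YY R₀ f c p q := by
  induction p using Fin.succAboveCases c with
  | x =>
    induction q using Fin.succAboveCases c with
    | x => simp [YY_cc]
    | p j => simp [YY_cs, YY_sc]
  | p i =>
    induction q using Fin.succAboveCases c with
    | x => simp [YY_cs, YY_sc]
    | p j =>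
      rw [YY_ss, YY_ss, XA_swap, TrivSqZeroExt.inl_neg]

lemma YY_self (p) : YY R₀ f c p p = 0 := by
  induction p using Fin.succAboveCases c with
  | x => exact YY_cc R₀ f c
  | p i => rw [YY_ss, XA_self, TrivSqZeroExt.inl_zero]

def Psi0 : MvPolynomial (P2 (f + 1)) R₀ →+* Tz R₀ f :=
  MvPolynomial.eval₂Hom
    ((TrivSqZeroExt.inlHom (Aring R₀ f) (Nmod R₀ f)).comp (algebraMap R₀ (Aring R₀ f)))
    (fun p => YY R₀ f c p.1.1 p.1.2)

lemma Psi0_xv (p q) : Psi0 R₀ f c (xv R₀ (f + 1) p q) = YY R₀ f c p q := by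
  unfold xv Psi0
  split_ifs with h1 h2
  · simp
  · simp [← YY_swap]
  · obtain rfl : p = q := by omega
    rw [YY_self, map_zero]

lemma inl_mul_inr' (a : Aring R₀ f) (x : Nmod R₀ f) :
    (TrivSqZeroExt.inl a * TrivSqZeroExt.inr x : Tz R₀ f) = TrivSqZeroExt.inr (a • x) :=
  TrivSqZeroExt.inl_mul_inr a x

lemma Psi0_pf4 (i j k l : Fin (f + 1)) (h1 : i < j) (h2 : j < k) (h3 : k < l) :
    Psi0 R₀ f c (pf4 R₀ (f + 1) i j k l) = 0 := by
  have key : ∀ i j k : Fin f, i < j → j < k →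
      (TrivSqZeroExt.inl (XA R₀ f j k) * TrivSqZeroExt.inr (ee R₀ f i)
        - TrivSqZeroExt.inl (XA R₀ f i k) * TrivSqZeroExt.inr (ee R₀ f j)
        + TrivSqZeroExt.inl (XA R₀ f i j) * TrivSqZeroExt.inr (ee R₀ f k) : Tz R₀ f) = 0 := by
    intro i j k h1 h2
    rw [inl_mul_inr', inl_mul_inr', inl_mul_inr', ← TrivSqZeroExt.inr_sub,
      ← TrivSqZeroExt.inr_add, ee_rel R₀ f i j k h1 h2, TrivSqZeroExt.inr_zero]
  simp only [pf4, map_add, map_sub, map_mul, Psi0_xv]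
  have hs : ∀ p, p = c ∨ ∃ p', p = c.succAbove p' := fun p => by
    rcases Fin.eq_self_or_eq_succAbove c p with h | h
    · exact Or.inl h
    · exact Or.inr h
  rcases hs i with rfl | ⟨i, rfl⟩
  · rcases hs j with rfl | ⟨j, rfl⟩
    · exact absurd h1 (lt_irrefl _)
    rcases hs k with rfl | ⟨k, rfl⟩
    · exact absurd (h1.trans h2) (lt_irrefl _)
    rcases hs l with rfl | ⟨l, rfl⟩
    · exact absurd ((h1.trans h2).trans h3) (lt_irrefl _)
    simp only [YY_cs, YY_ss]
    rw [Fin.succAbove_lt_succAbove_iff] at h2 h3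
    linear_combination - key j k l h2 h3
  rcases hs j with rfl | ⟨j, rfl⟩
  · rcases hs k with rfl | ⟨k, rfl⟩
    · exact absurd h2 (lt_irrefl _)
    rcases hs l with rfl | ⟨l, rfl⟩
    · exact absurd (h2.trans h3) (lt_irrefl _)
    simp only [YY_cs, YY_sc, YY_ss]
    have h1 := h1.trans h2
    rw [Fin.succAbove_lt_succAbove_iff] at h1 h3
    linear_combination key i k l h1 h3
  rcases hs k with rfl | ⟨k, rfl⟩
  · rcases hs l with rfl | ⟨l, rfl⟩
    · exact absurd h3 (lt_irrefl _)
    simp only [YY_cs, YY_sc, YY_ss]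
    have h2 := h2.trans h3
    rw [Fin.succAbove_lt_succAbove_iff] at h1 h2
    linear_combination - key i j l h1 h2
  rcases hs l with rfl | ⟨l, rfl⟩
  · simp only [YY_sc, YY_ss]
    rw [Fin.succAbove_lt_succAbove_iff] at h1 h2
    linear_combination key i j k h1 h2
  · simp only [YY_ss]
    rw [Fin.succAbove_lt_succAbove_iff] at h1 h2 h3
    rw [← TrivSqZeroExt.inl_mul, ← TrivSqZeroExt.inl_mul, ← TrivSqZeroExt.inl_mul,
      ← TrivSqZeroExt.inl_sub, ← TrivSqZeroExt.inl_add, pluck R₀ f i j k l h1 h2 h3,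
      TrivSqZeroExt.inl_zero]

def Psi : Aring R₀ (f + 1) →+* Tz R₀ f :=
  Ideal.Quotient.lift (Pf4 R₀ (f + 1)) (Psi0 R₀ f c) (by
    have : Pf4 R₀ (f + 1) ≤ RingHom.ker (Psi0 R₀ f c) := by
      refine Ideal.span_le.2 ?_
      rintro _ ⟨i, j, k, l, h1, h2, h3, rfl⟩
      exact Psi0_pf4 R₀ f c i j k l h1 h2 h3
    intro a ha
    exact this ha)

lemma Psi_XA (p q) : Psi R₀ f c (XA R₀ (f + 1) p q) = YY R₀ f c p q := Psi0_xv R₀ f c p q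

def iotaPre : MvPolynomial (P2 f) R₀ →ₐ[R₀] Aring R₀ (f + 1) :=
  MvPolynomial.aeval (fun p => XA R₀ (f + 1) (c.succAbove p.1.1) (c.succAbove p.1.2))

lemma iotaPre_xv (p q) : iotaPre R₀ f c (xv R₀ f p q) =
    XA R₀ (f + 1) (c.succAbove p) (c.succAbove q) := by
  unfold xv iotaPre
  split_ifs with h1 h2
  · simp
  · simp [← XA_swap]
  · obtain rfl : p = q := by omega
    rw [XA_self, map_zero]

def iotaA : Aring R₀ f →+* Aring R₀ (f + 1) :=
  Ideal.Quotient.lift (Pf4 R₀ f) (iotaPre R₀ f c).toRingHom (by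
    have : Pf4 R₀ f ≤ RingHom.ker (iotaPre R₀ f c).toRingHom := by
      refine Ideal.span_le.2 ?_
      rintro _ ⟨i, j, k, l, h1, h2, h3, rfl⟩
      change iotaPre R₀ f c _ = 0
      simp only [pf4, map_add, map_sub, map_mul, iotaPre_xv]
      apply pluck <;> rwa [Fin.succAbove_lt_succAbove_iff]
    intro a ha
    exact this ha)

lemma iotaA_XA (p q) : iotaA R₀ f c (XA R₀ f p q) =
    XA R₀ (f + 1) (c.succAbove p) (c.succAbove q) := iotaPre_xv R₀ f c p q

lemma Psi_iotaA (a : Aring R₀ f) : Psi R₀ f c (iotaA R₀ f c a) = TrivSqZeroExt.inl a := by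
  have : (Psi R₀ f c).comp (iotaA R₀ f c) = TrivSqZeroExt.inlHom (Aring R₀ f) (Nmod R₀ f) := by
    apply Ideal.Quotient.ringHom_ext
    apply MvPolynomial.ringHom_ext
    · intro r
      change Psi R₀ f c (iotaPre R₀ f c (MvPolynomial.C r)) = _
      have : iotaPre R₀ f c (MvPolynomial.C r) = Ideal.Quotient.mk _ (MvPolynomial.C r) := by
        rw [← MvPolynomial.algebraMap_eq, AlgHom.commutes]
        rfl
      rw [this]
      change Psi0 R₀ f c _ = _
      simp [Psi0]
      rfl
    · rintro ⟨⟨i, j⟩, h⟩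
      have e : MvPolynomial.X ⟨(i, j), h⟩ = xv R₀ f i j := by simp only at h; simp [xv, h]
      rw [e]
      change Psi R₀ f c (iotaA R₀ f c (XA R₀ f i j)) = TrivSqZeroExt.inl (XA R₀ f i j)
      rw [iotaA_XA, Psi_XA, YY_ss]
  exact DFunLike.congr_fun this a

end

lemma comp_zero (R₀ : Type u) [CommRing R₀] [IsDomain R₀] (f : ℕ) (u : T3 f → Aring R₀ f) :
    (XA R₀ f).mulVec ((M1 R₀ f).mulVec u) = 0 := by
  rw [Matrix.mulVec_mulVec]
  have : XA R₀ f * M1 R₀ f = 0 := by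
    ext r ⟨⟨i, j, k⟩, h1, h2⟩
    rw [Matrix.mul_apply]
    simp only [mul_comm (XA R₀ f r _)]
    rw [M1_dot _ _ _ _ _ _ h1 h2]
    rw [Matrix.zero_apply]
    linear_combination pluck' R₀ f r i j k
  rw [this, Matrix.zero_mulVec]

lemma comp_zero' (R₀ : Type u) [CommRing R₀] [IsDomain R₀] (f : ℕ) (u : Fin f → Aring R₀ f) :
    (M1 R₀ f).transpose.mulVec ((XA R₀ f).mulVec u) = 0 := by
  rw [Matrix.mulVec_mulVec]
  have : (M1 R₀ f).transpose * XA R₀ f = 0 := by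
    ext ⟨⟨i, j, k⟩, h1, h2⟩ r
    rw [Matrix.mul_apply]
    simp only [Matrix.transpose_apply]
    rw [M1_dot R₀ f (fun s => XA R₀ f s r) _ _ _ h1 h2]
    rw [Matrix.zero_apply, XA_swap R₀ f r i, XA_swap R₀ f r j, XA_swap R₀ f r k]
    linear_combination - pluck' R₀ f r i j k
  rw [this, Matrix.zero_mulVec]

lemma exact1 (R₀ : Type u) [CommRing R₀] [IsDomain R₀] (f : ℕ) (hf : 4 ≤ f)
    (v : Fin f → Aring R₀ f) (hv : (XA R₀ f).mulVec v = 0) :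
    v ∈ LinearMap.range (M1 R₀ f).mulVecLin := by
  let c : Fin (f + 1) := ⟨2, by omega⟩
  let i0 : Fin f := ⟨0, by omega⟩
  let i1 : Fin f := ⟨1, by omega⟩
  have h01 : i0 < i1 := by simp [i0, i1]
  have hr : ∀ i, ∑ j, XA R₀ (f + 1) (c.succAbove i) (c.succAbove j) * iotaA R₀ f c (v j) = 0 := by
    intro i
    have := congrArg (iotaA R₀ f c) (congrFun hv i)
    rw [Matrix.mulVec, dotProduct, map_sum] at this
    simpa [iotaA_XA] using this
  have hg : ∑ j, iotaA R₀ f c (v j) * XA R₀ (f + 1) (c.succAbove j) c = 0 := by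
    have hne : XA R₀ (f + 1) (c.succAbove i0) (c.succAbove i1) ≠ 0 :=
      XA_ne _ _ _ _ (by rwa [Fin.succAbove_lt_succAbove_iff])
    refine (mul_eq_zero.1 ?_).resolve_left hne
    have e : XA R₀ (f + 1) (c.succAbove i0) (c.succAbove i1) *
      ∑ j, iotaA R₀ f c (v j) * XA R₀ (f + 1) (c.succAbove j) c =
      XA R₀ (f + 1) (c.succAbove i1) c *
        (∑ j, XA R₀ (f + 1) (c.succAbove i0) (c.succAbove j) * iotaA R₀ f c (v j))
      - XA R₀ (f + 1) (c.succAbove i0) c *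
        (∑ j, XA R₀ (f + 1) (c.succAbove i1) (c.succAbove j) * iotaA R₀ f c (v j)) := by
      rw [Finset.mul_sum, Finset.mul_sum, Finset.mul_sum, ← Finset.sum_sub_distrib]
      refine Finset.sum_congr rfl fun j _ => ?_
      linear_combination iotaA R₀ f c (v j) *
        pluck' R₀ (f + 1) (c.succAbove i0) (c.succAbove i1) (c.succAbove j) c
    rw [e, hr, hr, mul_zero, mul_zero, sub_zero]
  have h2 := congrArg (Psi R₀ f c) hg
  simp only [map_sum, map_mul, Psi_iotaA, Psi_XA, YY_sc, map_zero, inl_mul_inr'] at h2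
  have h3 := congrArg TrivSqZeroExt.snd h2
  rw [TrivSqZeroExt.snd_sum] at h3
  simp only [TrivSqZeroExt.snd_inr, TrivSqZeroExt.snd_zero] at h3
  rw [ee_sum] at h3
  exact (qm_zero _ _ _).1 h3

lemma exact2 (R₀ : Type u) [CommRing R₀] [IsDomain R₀] (f : ℕ) (hf : 4 ≤ f)
    (v : Fin f → Aring R₀ f) (hv : (M1 R₀ f).transpose.mulVec v = 0) :
    ∃ w, (XA R₀ f).mulVec w = v := by
  let c : Fin (f + 1) := ⟨2, by omega⟩
  let i0 : Fin f := ⟨0, by omega⟩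
  let i1 : Fin f := ⟨1, by omega⟩
  let s : Fin f := ⟨f - 2, by omega⟩
  let t : Fin f := ⟨f - 1, by omega⟩
  have h01 : i0 < i1 := by simp [i0, i1]
  have h1s : i1 < s := by simp only [i1, s, Fin.lt_def]; omega
  have hst : s < t := by simp only [s, t, Fin.lt_def]; omega
  have hD : ∀ i j k, i < j → j < k →
      XA R₀ f j k * v i - XA R₀ f i k * v j + XA R₀ f i j * v k = 0 := by
    intro i j k h1 h2
    rw [← M1_dot R₀ f v i j k h1 h2]
    exact congrFun hv ⟨(i, j, k), h1, h2⟩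
  have hD' : ∀ i j k, i < j → j < k →
      XA R₀ (f + 1) (c.succAbove j) (c.succAbove k) * iotaA R₀ f c (v i)
      - XA R₀ (f + 1) (c.succAbove i) (c.succAbove k) * iotaA R₀ f c (v j)
      + XA R₀ (f + 1) (c.succAbove i) (c.succAbove j) * iotaA R₀ f c (v k) = 0 := by
    intro i j k h1 h2
    have := congrArg (iotaA R₀ f c) (hD i j k h1 h2)
    simpa [iotaA_XA] using this
  have l01 : c.succAbove i0 < c.succAbove i1 := by rwa [Fin.succAbove_lt_succAbove_iff]
  have lst : c.succAbove s < c.succAbove t := by rwa [Fin.succAbove_lt_succAbove_iff]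
  have v0 : (c.succAbove i0 : ℕ) = 0 := by simp [Fin.succAbove, c, i0, Fin.lt_def]
  have v1 : (c.succAbove i1 : ℕ) = 1 := by simp [Fin.succAbove, c, i1, Fin.lt_def]
  have vs : (c.succAbove s : ℕ) = f - 1 := by
    have : ¬ (f - 2 < 2) := by omega
    simp only [Fin.succAbove, c, s, Fin.lt_def, Fin.val_castSucc, this, if_false, Fin.val_succ]
    omega
  have vt : (c.succAbove t : ℕ) = f := by
    have : ¬ (f - 1 < 2) := by omega
    simp only [Fin.succAbove, c, t, Fin.lt_def, Fin.val_castSucc, this, if_false, Fin.val_succ]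
    omega
  obtain ⟨m, hm⟩ := reg_pair R₀ (f + 1) ⟨(c.succAbove i0, c.succAbove i1), l01⟩
    ⟨(c.succAbove s, c.succAbove t), lst⟩
    (by
      intro h
      have := congrArg (fun p : P2 (f + 1) => (p.1.1 : ℕ)) h
      simp only [v0, vs] at this
      omega)
    (by
      rintro ⟨⟨a, b⟩, hab⟩
      simp only [Fin.le_def, Fin.lt_def, v0, v1] at hab ⊢
      omega)
    (by
      rintro ⟨⟨a, b⟩, hab⟩
      simp only [Fin.le_def, Fin.lt_def, vs, vt] at hab ⊢
      omega)
    (iotaA R₀ f c (v i0) * XA R₀ (f + 1) (c.succAbove i1) c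
      - iotaA R₀ f c (v i1) * XA R₀ (f + 1) (c.succAbove i0) c)
    (iotaA R₀ f c (v s) * XA R₀ (f + 1) (c.succAbove t) c
      - iotaA R₀ f c (v t) * XA R₀ (f + 1) (c.succAbove s) c)
    (by
      rw [mon_single, mon_single]
      linear_combination XA R₀ (f + 1) (c.succAbove i1) c * hD' i0 s t (h01.trans h1s) hst
        - XA R₀ (f + 1) (c.succAbove i0) c * hD' i1 s t h1s hst
        - iotaA R₀ f c (v s) * pluck' R₀ (f + 1) (c.succAbove i0) (c.succAbove i1) (c.succAbove t) c
        + iotaA R₀ f c (v t) * pluck' R₀ (f + 1) (c.succAbove i0) (c.succAbove i1) (c.succAbove s) c)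
  rw [mon_single] at hm
  have h2 := congrArg (Psi R₀ f c) hm
  simp only [map_sub, map_mul, Psi_iotaA, Psi_XA, YY_sc, YY_ss, inl_mul_inr'] at h2
  have h3 := congrArg TrivSqZeroExt.snd h2
  rw [TrivSqZeroExt.snd_sub, TrivSqZeroExt.snd_mul] at h3
  simp only [TrivSqZeroExt.snd_inr, TrivSqZeroExt.fst_inl, TrivSqZeroExt.snd_inl, smul_zero,
    add_zero] at h3
  obtain ⟨w, hw⟩ := qm_surj _ _ (Psi R₀ f c m).snd
  rw [← hw] at h3
  unfold ee at h3
  rw [← sub_eq_zero, ← map_smul, ← map_smul, ← map_smul, ← map_sub, ← map_sub, qm_zero] at h3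
  obtain ⟨z, hz⟩ := h3
  rw [Matrix.mulVecLin_apply] at hz
  have h4 := comp_zero R₀ f z
  rw [hz] at h4
  refine ⟨w, ?_⟩
  ext i
  have h5 := congrFun h4 i
  simp only [Matrix.mulVec_sub, Matrix.mulVec_smul, Matrix.mulVec_single_one, Pi.sub_apply,
    Pi.smul_apply, Matrix.col_apply, smul_eq_mul, Pi.zero_apply] at h5
  apply mul_left_cancel₀ (XA_ne R₀ f i0 i1 h01)
  have h6 : v i0 * XA R₀ f i i1 - v i1 * XA R₀ f i i0 = XA R₀ f i0 i1 * v i := by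
    by_cases e0 : i = i0
    · rw [e0, XA_self]; ring
    · by_cases e1 : i = i1
      · rw [e1, XA_self, XA_swap R₀ f i0 i1]; ring
      · have hi : i1 < i := by
          rw [Fin.lt_def]
          have a0 : (i : ℕ) ≠ 0 := fun h => e0 (Fin.ext h)
          have a1 : (i : ℕ) ≠ 1 := fun h => e1 (Fin.ext h)
          simp only [i1]
          omega
        rw [XA_swap R₀ f i0 i, XA_swap R₀ f i1 i]
        linear_combination - hD i0 i1 i h01 hi
  linear_combination h6 - h5

end Final

/-- for a domain `R₀` and `f ≥ 4`, the complex
`⋀³F̄* --d₁--> F̄* --d₀--> F̄ --δ₁--> ⋀³F̄` over `A = R/Pf₄(X)` is exact, where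
(in coordinates) the matrix of `d₀` is `-X` and the matrix of `δ₁` is the
transpose of the matrix of `d₁`. -/
theorem stmt_8 (R₀ : Type u) [CommRing R₀] [IsDomain R₀] (f : ℕ) (hf : 4 ≤ f) :
    letI A := Aring R₀ f
    letI d1 : (T3 f → A) →ₗ[A] (Fin f → A) := (M1 R₀ f).mulVecLin
    letI d0 : (Fin f → A) →ₗ[A] (Fin f → A) := (-(XA R₀ f)).mulVecLin
    letI δ1 : (Fin f → A) →ₗ[A] (T3 f → A) := (Matrix.transpose (M1 R₀ f)).mulVecLin
    Function.Exact d1 d0 ∧ Function.Exact d0 δ1 := by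
  refine ⟨fun y => ?_, fun y => ?_⟩
  · constructor
    · intro h
      rw [Matrix.mulVecLin_apply, Matrix.neg_mulVec, neg_eq_zero] at h
      exact exact1 R₀ f hf y h
    · rintro ⟨u, rfl⟩
      rw [Matrix.mulVecLin_apply, Matrix.mulVecLin_apply, Matrix.neg_mulVec, comp_zero, neg_zero]
  · constructor
    · intro h
      rw [Matrix.mulVecLin_apply] at h
      obtain ⟨w, hw⟩ := exact2 R₀ f hf y h
      refine ⟨-w, ?_⟩
      rw [Matrix.mulVecLin_apply, Matrix.neg_mulVec, Matrix.mulVec_neg, neg_neg, hw]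
    · rintro ⟨u, rfl⟩
      rw [Matrix.mulVecLin_apply, Matrix.mulVecLin_apply, Matrix.neg_mulVec, Matrix.mulVec_neg,
        comp_zero', neg_zero]

end AluffiStmt
end
end

section
/- Let $R_0$ be an arbitrary commutative Noetherian ring, $\mathfrak{f} \geq 3$, $\mathcal{R} = R_0[x_{i,j} : 1 \le i < j \le \mathfrak{f}; \ t_1, \dots, t_{\mathfrak f}]$, $\mathbf{X}$ the generic alternating matrix, $\mathbf{t} = [t_1, \dots, t_{\mathfrak f}]$, and $J = \operatorname{Pf}_4(\mathbf{X}) + I_1(\mathbf{t}\mathbf{X})$. Then $\operatorname{ht} J \geq \binom{\mathfrak{f}-2}{2} + 2$. -/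
open CategoryTheory

noncomputable section
namespace AluffiStmt

universe u

/-- Variables for the ring `𝓡 = R₀[x_{i,j}; t_i]`. -/
abbrev Var (f : ℕ) := P2 f ⊕ Fin f

/-- The `(i,j)` entry of the generic alternating matrix `X` in `𝓡`. -/
def xvt (R₀ : Type u) [CommRing R₀] (f : ℕ) (i j : Fin f) : MvPolynomial (Var f) R₀ :=
  if h : i < j then MvPolynomial.X (Sum.inl ⟨(i, j), h⟩)
  else if h : j < i then - MvPolynomial.X (Sum.inl ⟨(j, i), h⟩) else 0

/-- The entry `t_i` of the generic row vector `t` in `𝓡`. -/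
def tvt (R₀ : Type u) [CommRing R₀] (f : ℕ) (i : Fin f) : MvPolynomial (Var f) R₀ :=
  MvPolynomial.X (Sum.inr i)

/-- The Pfaffian of the `4 × 4` principal submatrix of `X` with rows/columns
`i < j < k < l`. -/
def pf4t (R₀ : Type u) [CommRing R₀] (f : ℕ) (i j k l : Fin f) : MvPolynomial (Var f) R₀ :=
  xvt R₀ f i j * xvt R₀ f k l - xvt R₀ f i k * xvt R₀ f j l + xvt R₀ f i l * xvt R₀ f j k

/-- The ideal `Pf₄(X)` of `𝓡`. -/
def Pf4t (R₀ : Type u) [CommRing R₀] (f : ℕ) : Ideal (MvPolynomial (Var f) R₀) :=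
  Ideal.span {p | ∃ i j k l : Fin f, i < j ∧ j < k ∧ k < l ∧ p = pf4t R₀ f i j k l}

/-- The `j`-th entry of the row vector `t·X`. -/
def tX (R₀ : Type u) [CommRing R₀] (f : ℕ) (j : Fin f) : MvPolynomial (Var f) R₀ :=
  ∑ i : Fin f, tvt R₀ f i * xvt R₀ f i j

/-- The ideal `I₁(t·X)` generated by the entries of `t·X`. -/
def ItX (R₀ : Type u) [CommRing R₀] (f : ℕ) : Ideal (MvPolynomial (Var f) R₀) :=
  Ideal.span {p | ∃ j : Fin f, p = tX R₀ f j}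

/-- The ideal `J = Pf₄(X) + I₁(t·X)`. -/
def Jt (R₀ : Type u) [CommRing R₀] (f : ℕ) : Ideal (MvPolynomial (Var f) R₀) :=
  Pf4t R₀ f + ItX R₀ f

/-- The height of an ideal: the infimum of the heights of the primes
containing it. -/
def idealHeight (R : Type u) [CommRing R] (J : Ideal R) : ℕ∞ :=
  sInf {h | ∃ p : PrimeSpectrum R, J ≤ p.asIdeal ∧ h = Order.height p}

open MvPolynomial in
/-- The substitution map used to build the chain of primes below `P`. -/
def psi {σ : Type*} {R : Type u} [CommRing R] (P : Ideal (MvPolynomial σ R)) (S : Set σ) :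
    MvPolynomial σ R →+* MvPolynomial σ (MvPolynomial σ R ⧸ P) :=
  open Classical in
  eval₂Hom (C.comp ((Ideal.Quotient.mk P).comp C))
    (fun v => if v ∈ S then X v else C (Ideal.Quotient.mk P (X v)))

open MvPolynomial in
lemma psi_supp {σ : Type*} {R : Type u} [CommRing R] (P : Ideal (MvPolynomial σ R)) (S E : Set σ)
    (hSE : S ⊆ E) (p : MvPolynomial σ R) (hp : p ∈ supported R Eᶜ) :
    psi P S p = C (Ideal.Quotient.mk P p) := by
  classical
  refine Algebra.adjoin_induction (p := fun p _ => psi P S p = C (Ideal.Quotient.mk P p))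
    ?_ ?_ ?_ ?_ hp
  · rintro x ⟨v, hv, rfl⟩
    have : v ∉ S := fun h => hv (hSE h)
    simp [psi, this]
  · intro r
    simp [psi, algebraMap_eq]
  · intro x y _ _ hx hy
    simp [hx, hy]
  · intro x y _ _ hx hy
    simp [hx, hy]

open MvPolynomial in
lemma psi_insert {σ : Type*} {R : Type u} [CommRing R] (P : Ideal (MvPolynomial σ R))
    (S : Set σ) (e : σ) (he : e ∉ S) :
    psi P S = (eval₂Hom C (fun v => open Classical in
        if v = e then C (Ideal.Quotient.mk P (X v)) else X v)).comp (psi P (insert e S)) := by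
  classical
  apply MvPolynomial.ringHom_ext
  · intro r; simp [psi]
  · intro v
    by_cases hv : v = e
    · subst hv; simp [psi, he]
    · by_cases hS : v ∈ S <;> simp [psi, hv, hS]

open MvPolynomial in
lemma aux_zero {σ : Type*} {A : Type*} [CommRing A] (P : Ideal A) (d x h : A)
    (hP : d * x - h ∈ P) :
    (C (Ideal.Quotient.mk P d) * C (Ideal.Quotient.mk P x) - C (Ideal.Quotient.mk P h) :
      MvPolynomial σ (A ⧸ P)) = 0 := by
  have h0 : Ideal.Quotient.mk P (d * x - h) = 0 := Ideal.Quotient.eq_zero_iff_mem.2 hP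
  rw [map_sub, map_mul] at h0
  rw [← C_mul, ← C_sub, h0, C_0]

open MvPolynomial in
lemma aux_coeff {σ : Type*} {A : Type*} [CommRing A] (e : σ) (d h : A)
    (h2 : (C d * X e - C h : MvPolynomial σ A) = 0) : d = 0 := by
  classical
  have h3 := congrArg (coeff (Finsupp.single e 1)) h2
  have h0 : ¬ (0 = Finsupp.single e 1) := fun h => by
    have := DFunLike.congr_fun h e
    simp at this
  rw [coeff_sub, coeff_C_mul, coeff_X, coeff_C, if_neg h0] at h3
  simpa using h3

open MvPolynomial in
lemma ker_lt {σ : Type*} {R : Type u} [CommRing R] (P : Ideal (MvPolynomial σ R))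
    (E : Set σ) (d : MvPolynomial σ R) (hd : d ∉ P) (hdE : d ∈ supported R Eᶜ)
    (S : Set σ) (e : σ) (heE : e ∈ E) (hSE : S ⊆ E) (heS : e ∉ S)
    (h : MvPolynomial σ R) (hh : h ∈ supported R Eᶜ) (hP : d * X e - h ∈ P) :
    RingHom.ker (psi P (insert e S)) < RingHom.ker (psi P S) := by
  classical
  refine lt_of_le_not_ge ?_ ?_
  · intro x hx
    rw [RingHom.mem_ker] at hx ⊢
    rw [psi_insert P S e heS, RingHom.comp_apply, hx, map_zero]
  · intro hle
    have h1 : d * X e - h ∈ RingHom.ker (psi P S) := by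
      rw [RingHom.mem_ker]
      rw [map_sub, map_mul, psi_supp _ S E hSE d hdE, psi_supp _ S E hSE h hh]
      have : psi P S (X e) = C (Ideal.Quotient.mk P (X e)) := by
        simp [psi, heS]
      rw [this]
      exact aux_zero _ d (X e) h hP
    have h2 := hle h1
    rw [RingHom.mem_ker] at h2
    have hSE' : insert e S ⊆ E := Set.insert_subset heE hSE
    rw [map_sub, map_mul, psi_supp _ _ E hSE' d hdE, psi_supp _ _ E hSE' h hh] at h2
    have : psi P (insert e S) (X e) = X e := by simp [psi]
    rw [this] at h2
    exact hd (Ideal.Quotient.eq_zero_iff_mem.1 (aux_coeff e _ _ h2))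

open MvPolynomial in
lemma height_ge {σ : Type*} {R : Type u} [CommRing R] (P : PrimeSpectrum (MvPolynomial σ R))
    (E : Finset σ) (d : MvPolynomial σ R) (hd : d ∉ P.asIdeal)
    (hdE : d ∈ supported R (E : Set σ)ᶜ)
    (H : ∀ e ∈ E, ∃ h ∈ supported R (E : Set σ)ᶜ, d * X e - h ∈ P.asIdeal) :
    (E.card : ℕ∞) ≤ Order.height P := by
  classical
  let Q : Set σ → PrimeSpectrum (MvPolynomial σ R) := fun S =>
    ⟨RingHom.ker (psi P.asIdeal S), RingHom.ker_isPrime _⟩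
  have key : ∀ T : Finset σ, T ⊆ E → (T.card : ℕ∞) ≤ Order.height (Q ((E \ T : Finset σ) : Set σ)) := by
    intro T
    induction T using Finset.induction_on with
    | empty => simp
    | insert e T heT ih =>
      intro hT
      have heE : e ∈ E := hT (Finset.mem_insert_self _ _)
      have hTE : T ⊆ E := fun x hx => hT (Finset.mem_insert_of_mem hx)
      set S : Set σ := ((E \ insert e T : Finset σ) : Set σ) with hS
      have heS : e ∉ S := by simp [hS]
      have hSE : S ⊆ E := by intro x hx; simp [hS] at hx; exact hx.1
      have hins : ((E \ T : Finset σ) : Set σ) = insert e S := by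
        ext x
        by_cases hx : x = e
        · subst hx; simp [heE, heT]
        · simp [hS, hx]
      have ih' := ih hTE
      rw [hins] at ih'
      obtain ⟨h, hh, hP⟩ := H e heE
      have hlt : Q (insert e S) < Q S := by
        exact (PrimeSpectrum.asIdeal_lt_asIdeal _ _).1
          (ker_lt P.asIdeal E d hd hdE S e heE hSE heS h hh hP)
      rw [Finset.card_insert_of_notMem heT]
      push_cast
      exact (add_le_add_left ih' 1).trans (Order.height_add_one_le hlt)
  have := key E subset_rfl
  have hQ : Q ((E \ E : Finset σ) : Set σ) = P := by
    ext x
    change psi P.asIdeal _ x = 0 ↔ _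
    rw [psi_supp P.asIdeal _ ∅ (by simp) x (by simp [supported_univ]),
      ← Ideal.Quotient.eq_zero_iff_mem, map_eq_zero_iff _ (C_injective _ _)]
  rwa [hQ] at this

lemma xvt_swap (R₀ : Type u) [CommRing R₀] (f : ℕ) (i j : Fin f) :
    xvt R₀ f j i = - xvt R₀ f i j := by
  unfold xvt
  rcases lt_trichotomy i j with h | h | h
  · simp [h, h.not_gt]
  · subst h; simp
  · simp [h, h.not_gt]

lemma xvt_self (R₀ : Type u) [CommRing R₀] (f : ℕ) (i : Fin f) : xvt R₀ f i i = 0 := by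
  simp [xvt]

lemma pf_mem (R₀ : Type u) [CommRing R₀] (f : ℕ) (a b k l : Fin f) (hab : a < b) (hkl : k < l)
    (h1 : k ≠ a) (h2 : k ≠ b) (h3 : l ≠ a) (h4 : l ≠ b) :
    pf4t R₀ f a b k l ∈ Pf4t R₀ f := by
  have key : ∀ i j m n : Fin f, i < j → j < m → m < n → pf4t R₀ f i j m n ∈ Pf4t R₀ f :=
    fun i j m n h h' h'' => Ideal.subset_span ⟨i, j, m, n, h, h', h'', rfl⟩
  have s1 := xvt_swap R₀ f k a
  have s2 := xvt_swap R₀ f k b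
  have s3 := xvt_swap R₀ f l a
  have s4 := xvt_swap R₀ f l b
  have pos : ∀ p q : MvPolynomial (Var f) R₀, p ∈ Pf4t R₀ f → q = p → q ∈ Pf4t R₀ f :=
    fun p q hp h => h ▸ hp
  have neg : ∀ p q : MvPolynomial (Var f) R₀, p ∈ Pf4t R₀ f → q = -p → q ∈ Pf4t R₀ f :=
    fun p q hp h => h ▸ neg_mem hp
  rcases h1.lt_or_gt with h1 | h1 <;> rcases h2.lt_or_gt with h2 | h2 <;>
  rcases h3.lt_or_gt with h3 | h3 <;> rcases h4.lt_or_gt with h4 | h4 <;> try (exfalso; omega)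
  · refine pos _ _ (key k l a b hkl h3 hab) ?_
    unfold pf4t; rw [s1, s2, s3, s4]; ring
  · refine neg _ _ (key k a l b h1 h3 h4) ?_
    unfold pf4t; rw [s1, s2, s4]; ring
  · refine pos _ _ (key k a b l h1 hab h4) ?_
    unfold pf4t; rw [s1, s2]; ring
  · refine pos _ _ (key a k l b h1 hkl h4) ?_
    unfold pf4t; rw [s2, s4]; ring
  · refine neg _ _ (key a k b l h1 h2 h4) ?_
    unfold pf4t; rw [s2]; ring
  · exact key a b k l hab h2 hkl

lemma xvt_supp (R₀ : Type u) [CommRing R₀] (f : ℕ) (i j : Fin f) (s : Set (Var f))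
    (h : ∀ p : P2 f, (p.1 = (i, j) ∨ p.1 = (j, i)) → Sum.inl p ∈ s) :
    xvt R₀ f i j ∈ MvPolynomial.supported R₀ s := by
  unfold xvt
  split_ifs with h1 h2
  · exact Algebra.subset_adjoin ⟨_, h _ (Or.inl rfl), rfl⟩
  · exact neg_mem (Algebra.subset_adjoin ⟨_, h _ (Or.inr rfl), rfl⟩)
  · exact zero_mem _

/-- pairs avoiding `a` and `b` -/
def E1 (f : ℕ) (a b : Fin f) : Finset (P2 f) :=
  Finset.univ.filter (fun p => p.1.1 ≠ a ∧ p.1.1 ≠ b ∧ p.1.2 ≠ a ∧ p.1.2 ≠ b)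

lemma E1_card (f : ℕ) (a b : Fin f) (hab : a ≠ b) : (f - 2).choose 2 ≤ (E1 f a b).card := by
  have hc : (({a, b} : Finset (Fin f))ᶜ).card = f - 2 := by
    rw [Finset.card_compl, Finset.card_pair hab, Fintype.card_fin]
  rw [← hc, ← Finset.card_powersetCard]
  refine Finset.card_le_card_of_surjOn (fun p => {p.1.1, p.1.2}) ?_
  intro s hs
  rw [Finset.mem_coe, Finset.mem_powersetCard] at hs
  obtain ⟨hs, h2⟩ := hs
  obtain ⟨x, y, hxy, rfl⟩ := Finset.card_eq_two.1 h2
  have hx := hs (by simp : x ∈ ({x, y} : Finset (Fin f)))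
  have hy := hs (by simp : y ∈ ({x, y} : Finset (Fin f)))
  simp only [Finset.mem_compl, Finset.mem_insert, Finset.mem_singleton, not_or] at hx hy
  rcases hxy.lt_or_gt with h | h
  · exact ⟨⟨(x, y), h⟩, by simp [E1, hx, hy], rfl⟩
  · exact ⟨⟨(y, x), h⟩, by simp [E1, hx, hy], Finset.pair_comm _ _⟩

lemma E_card (f : ℕ) (a b : Fin f) (hab : a ≠ b) (u v : Var f) (huv : u ≠ v)
    (hu : ∀ p ∈ E1 f a b, Sum.inl p ≠ u) (hv : ∀ p ∈ E1 f a b, Sum.inl p ≠ v) :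
    (f - 2).choose 2 + 2 ≤ (insert u (insert v ((E1 f a b).map Function.Embedding.inl : Finset (Var f)))).card := by
  have := E1_card f a b hab
  rw [Finset.card_insert_of_notMem, Finset.card_insert_of_notMem, Finset.card_map]
  · omega
  · simp only [Finset.mem_map, not_exists, not_and]
    exact hv
  · simp only [Finset.mem_insert, Finset.mem_map, not_or, not_exists, not_and]
    exact ⟨huv, hu⟩

/-- for an arbitrary Noetherian ring `R₀` and `f ≥ 3`, the
ideal `J = Pf₄(X) + I₁(tX)` of `𝓡 = R₀[x_{i,j}; t_i]` has height at least
`(f-2 choose 2) + 2`. -/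
theorem stmt_11 (R₀ : Type u) [CommRing R₀] [IsNoetherianRing R₀] (f : ℕ) (hf : 3 ≤ f) :
    ((Nat.choose (f - 2) 2 + 2 : ℕ) : ℕ∞) ≤
      idealHeight (MvPolynomial (Var f) R₀) (Jt R₀ f) := by
  refine le_sInf ?_
  rintro _ ⟨P, hJ, rfl⟩
  have hPf : Pf4t R₀ f ≤ P.asIdeal := le_sup_left.trans hJ
  have hIt : ItX R₀ f ≤ P.asIdeal := le_sup_right.trans hJ
  by_cases hA : ∀ p : P2 f, (MvPolynomial.X (Sum.inl p) : MvPolynomial (Var f) R₀) ∈ P.asIdeal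
  · let a : Fin f := ⟨0, by omega⟩
    let b : Fin f := ⟨1, by omega⟩
    let c : Fin f := ⟨2, by omega⟩
    have hab : a < b := by simp [a, b, Fin.lt_def]
    have hac : a < c := by simp [a, c, Fin.lt_def]
    have hbc : b ≠ c := by simp [b, c]
    refine le_trans ?_ (height_ge P
      (insert (Sum.inl ⟨(a, b), hab⟩) (insert (Sum.inl ⟨(a, c), hac⟩)
        ((E1 f a b).map Function.Embedding.inl : Finset (Var f)))) 1
      (fun h => P.2.ne_top ((Ideal.eq_top_iff_one _).2 h)) (one_mem _) ?_)
    · refine Nat.cast_le.2 (E_card f a b hab.ne _ _ ?_ ?_ ?_)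
      · simp [hbc]
      · rintro p hp h
        rw [Sum.inl.injEq] at h
        subst h; simp [E1] at hp
      · rintro p hp h
        rw [Sum.inl.injEq] at h
        subst h; simp [E1] at hp
    · intro e he
      refine ⟨0, zero_mem _, ?_⟩
      simp only [Finset.mem_insert, Finset.mem_map] at he
      rw [one_mul, sub_zero]
      rcases he with rfl | rfl | ⟨p, _, rfl⟩
      · exact hA _
      · exact hA _
      · exact hA p
  · push Not at hA
    obtain ⟨⟨⟨a, b⟩, hab⟩, hP⟩ := hA
    replace hab : a < b := hab
    have hx : xvt R₀ f a b = MvPolynomial.X (Sum.inl ⟨(a, b), hab⟩) := by simp [xvt, hab]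
    rw [← hx] at hP
    set E : Finset (Var f) := insert (Sum.inr a) (insert (Sum.inr b)
        ((E1 f a b).map Function.Embedding.inl : Finset (Var f))) with hE
    have hEl : ∀ p : P2 f, Sum.inl p ∈ E ↔ p ∈ E1 f a b := by
      intro p; simp [hE]
    have hEr : ∀ i : Fin f, Sum.inr i ∈ E ↔ (i = a ∨ i = b) := by
      intro i; simp [hE]
    -- the entries in the rows `a`, `b` avoid `E`
    have hsa : ∀ i, xvt R₀ f a i ∈ MvPolynomial.supported R₀ (E : Set (Var f))ᶜ := by
      intro i
      apply xvt_supp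
      rintro ⟨⟨x, y⟩, hxy⟩ h
      simp only [Set.mem_compl_iff, Finset.mem_coe, hEl]
      simp only [Prod.mk.injEq] at h
      simp only [E1, Finset.mem_filter]
      tauto
    have hsb : ∀ i, xvt R₀ f b i ∈ MvPolynomial.supported R₀ (E : Set (Var f))ᶜ := by
      intro i
      apply xvt_supp
      rintro ⟨⟨x, y⟩, hxy⟩ h
      simp only [Set.mem_compl_iff, Finset.mem_coe, hEl]
      simp only [Prod.mk.injEq] at h
      simp only [E1, Finset.mem_filter]
      tauto
    have hst : ∀ i ∈ (Finset.univ.erase a).erase b,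
        tvt R₀ f i ∈ MvPolynomial.supported R₀ (E : Set (Var f))ᶜ := by
      intro i hi
      simp only [Finset.mem_erase] at hi
      refine Algebra.subset_adjoin ⟨_, ?_, rfl⟩
      simp only [Set.mem_compl_iff, Finset.mem_coe, hEr]
      tauto
    have htX : ∀ j, tX R₀ f j = tvt R₀ f a * xvt R₀ f a j + (tvt R₀ f b * xvt R₀ f b j +
        ∑ i ∈ (Finset.univ.erase a).erase b, tvt R₀ f i * xvt R₀ f i j) := by
      intro j
      unfold tX
      rw [Finset.add_sum_erase _ (fun i => tvt R₀ f i * xvt R₀ f i j) (by simp [hab.ne']),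
        Finset.add_sum_erase _ (fun i => tvt R₀ f i * xvt R₀ f i j) (by simp)]
    have htXm : ∀ j, tX R₀ f j ∈ P.asIdeal := fun j => hIt (Ideal.subset_span ⟨j, rfl⟩)
    refine le_trans ?_ (height_ge P E (xvt R₀ f a b) hP (hsa b) ?_)
    · refine Nat.cast_le.2 (E_card f a b hab.ne _ _ ?_ ?_ ?_)
      · simp [hab.ne]
      · simp
      · simp
    · intro e he
      simp only [hE, Finset.mem_insert, Finset.mem_map] at he
      rcases he with rfl | rfl | ⟨⟨⟨k, l⟩, hkl⟩, hp, rfl⟩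
      · refine ⟨-∑ i ∈ (Finset.univ.erase a).erase b, tvt R₀ f i * xvt R₀ f i b, ?_, ?_⟩
        · refine neg_mem (sum_mem fun i hi => mul_mem (hst i hi) ?_)
          rw [xvt_swap R₀ f b i]
          exact neg_mem (hsb i)
        · have := htXm b
          rw [htX, xvt_self] at this
          convert this using 1
          simp only [tvt]; ring
      · refine ⟨∑ i ∈ (Finset.univ.erase a).erase b, tvt R₀ f i * xvt R₀ f i a, ?_, ?_⟩
        · refine (sum_mem fun i hi => mul_mem (hst i hi) ?_)
          rw [xvt_swap R₀ f a i]
          exact neg_mem (hsa i)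
        · have := neg_mem (htXm a)
          rw [htX, xvt_self, xvt_swap R₀ f a b] at this
          convert this using 1
          simp only [tvt]; ring
      · replace hkl : k < l := hkl
        simp only [E1, Finset.mem_filter] at hp
        obtain ⟨-, h1, h2, h3, h4⟩ := hp
        refine ⟨xvt R₀ f a k * xvt R₀ f b l - xvt R₀ f a l * xvt R₀ f b k,
          sub_mem (mul_mem (hsa _) (hsb _)) (mul_mem (hsa _) (hsb _)), ?_⟩
        have := hPf (pf_mem R₀ f a b k l hab hkl h1 h2 h3 h4)
        convert this using 1
        have hx' : xvt R₀ f k l = MvPolynomial.X (Sum.inl ⟨(k, l), hkl⟩) := by simp [xvt, hkl]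
        unfold pf4t
        rw [hx']
        simp only [Function.Embedding.inl_apply]
        ring

end AluffiStmt
end
end
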